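/- Let D = (V, A) be an unbalanced digraph. Then there exists a subset X ⊆ V which is overloaded in D (i.e., |out_D(X)| < |in_D(X)|) and such that the induced subdigraph D[X] is weakly connected. -/

import Mathlib

/-!
Complementation exchanges ingoing and outgoing arcs, so an unbalanced digraph `D` has an overloaded
set `X`. No arc joins two distinct weak components of `D[X]`; hence the arcs entering (leaving) `X`
are partitioned by the sets of arcs entering (leaving) the components. Comparing the two sums of
cardinals, some component of `D[X]` must be overloaded.
-/

/-- The set of arcs of `A` going out of the vertex set `X`. -/
def outArcs {V : Type*} (A : Set (V × V)) (X : Set V) : Set (V × V) :=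
  {e ∈ A | e.1 ∈ X ∧ e.2 ∉ X}

/-- The set of arcs of `A` going into the vertex set `X`. -/
def inArcs {V : Type*} (A : Set (V × V)) (X : Set V) : Set (V × V) :=
  {e ∈ A | e.1 ∉ X ∧ e.2 ∈ X}

/-- A digraph (given by its arc set `A`) is balanced if for each vertex set the
cardinalities of the ingoing and the outgoing arcs coincide. -/
def IsBalanced {V : Type*} (A : Set (V × V)) : Prop :=
  ∀ X : Set V, Cardinal.mk (inArcs A X) = Cardinal.mk (outArcs A X)

/-- `C` is (the arc set of) a directed cycle of the digraph with arc set `A`. -/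
def IsDicycle {V : Type*} (A : Set (V × V)) (C : Set (V × V)) : Prop :=
  ∃ (n : ℕ) (f : ZMod n → V), 2 ≤ n ∧ Function.Injective f ∧
    C = {p | ∃ i : ZMod n, p = (f i, f (i + 1))} ∧ C ⊆ A

/-- `P` is a partition of the arc set `A` into dicycles. -/
def IsDicyclePartition {V : Type*} (A : Set (V × V)) (P : Set (Set (V × V))) : Prop :=
  (∀ C ∈ P, IsDicycle A C) ∧ P.PairwiseDisjoint id ∧ ⋃₀ P = A

/-- Adjacency in the underlying undirected graph of the subdigraph of `A`
induced by the vertex set `S`. -/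
def AdjOn {V : Type*} (A : Set (V × V)) (S : Set V) (u v : V) : Prop :=
  u ∈ S ∧ v ∈ S ∧ ((u, v) ∈ A ∨ (v, u) ∈ A)

/-- Reachability in the underlying undirected graph of the subdigraph of `A`
induced by the vertex set `S`. -/
def ReachOn {V : Type*} (A : Set (V × V)) (S : Set V) : V → V → Prop :=
  Relation.ReflTransGen (AdjOn A S)

/-- `Y` is the vertex set of a weakly connected component of the subdigraph of
`A` induced by the vertex set `S`. -/
def IsWeakComponent {V : Type*} (A : Set (V × V)) (S : Set V) (Y : Set V) : Prop :=
  ∃ y ∈ S, Y = {v | ReachOn A S y v}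

/-- The subdigraph of `A` induced by the vertex set `X` is weakly connected. -/
def IsWeaklyConnectedOn {V : Type*} (A : Set (V × V)) (X : Set V) : Prop :=
  X.Nonempty ∧ ∀ u ∈ X, ∀ v ∈ X, ReachOn A X u v

open Cardinal Function

universe u v

/-- The vertex set `X` is overloaded in the digraph with arc set `A`: fewer arcs leave it than enter
it, as cardinals. -/
def IsOverloaded {V : Type*} (A : Set (V × V)) (X : Set V) : Prop :=
  #(outArcs A X) < #(inArcs A X)

section Complement

variable {V : Type*} (A : Set (V × V)) (X : Set V)

theorem inArcs_compl : inArcs A Xᶜ = outArcs A X := by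
  simp only [inArcs, outArcs, Set.mem_compl_iff, not_not]

theorem outArcs_compl : outArcs A Xᶜ = inArcs A X := by
  rw [← inArcs_compl, compl_compl]

theorem isOverloaded_compl_iff : IsOverloaded A Xᶜ ↔ #(inArcs A X) < #(outArcs A X) := by
  rw [IsOverloaded, inArcs_compl, outArcs_compl]

variable {A}

theorem exists_isOverloaded_of_not_isBalanced (h : ¬ IsBalanced A) : ∃ X, IsOverloaded A X := by
  obtain ⟨X, hX⟩ := not_forall.mp h
  rcases lt_or_gt_of_ne hX with hlt | hgt
  · exact ⟨Xᶜ, (isOverloaded_compl_iff A X).mpr hlt⟩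
  · exact ⟨X, hgt⟩

end Complement

section Union

variable {V : Type u} {ι : Type v} {A : Set (V × V)} {Y : ι → Set V}

theorem inArcs_iUnion (hsep : ∀ i j, ∀ x ∈ Y i, ∀ y ∈ Y j, (x, y) ∈ A → i = j) :
    inArcs A (⋃ i, Y i) = ⋃ i, inArcs A (Y i) := by
  ext ⟨x, y⟩
  simp only [inArcs, Set.mem_ofPred_eq, Set.mem_iUnion, not_exists]
  constructor
  · rintro ⟨hxy, hx, i, hy⟩
    exact ⟨i, hxy, hx i, hy⟩
  · rintro ⟨i, hxy, hx, hy⟩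
    exact ⟨hxy, fun j hj => hx (hsep j i x hj y hy hxy ▸ hj), i, hy⟩

theorem outArcs_iUnion (hsep : ∀ i j, ∀ x ∈ Y i, ∀ y ∈ Y j, (x, y) ∈ A → i = j) :
    outArcs A (⋃ i, Y i) = ⋃ i, outArcs A (Y i) := by
  ext ⟨x, y⟩
  simp only [outArcs, Set.mem_ofPred_eq, Set.mem_iUnion, not_exists]
  constructor
  · rintro ⟨hxy, ⟨i, hx⟩, hy⟩
    exact ⟨i, hxy, hx, hy i⟩
  · rintro ⟨i, hxy, hx, hy⟩
    exact ⟨hxy, ⟨i, hx⟩, fun j hj => hy (hsep i j x hx y hj hxy ▸ hj)⟩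

theorem pairwise_disjoint_inArcs (hY : Pairwise (Disjoint on Y)) :
    Pairwise (Disjoint on fun i => inArcs A (Y i)) := fun _ _ hij =>
  ((hY hij).preimage Prod.snd).mono (fun _ he => he.2.2) (fun _ he => he.2.2)

theorem pairwise_disjoint_outArcs (hY : Pairwise (Disjoint on Y)) :
    Pairwise (Disjoint on fun i => outArcs A (Y i)) := fun _ _ hij =>
  ((hY hij).preimage Prod.fst).mono (fun _ he => he.2.1) (fun _ he => he.2.1)

theorem IsOverloaded.exists_of_iUnion (hY : Pairwise (Disjoint on Y))
    (hsep : ∀ i j, ∀ x ∈ Y i, ∀ y ∈ Y j, (x, y) ∈ A → i = j)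
    (h : IsOverloaded A (⋃ i, Y i)) : ∃ i, IsOverloaded A (Y i) := by
  by_contra! hle
  have hle' : ∀ i, #(inArcs A (Y i)) ≤ #(outArcs A (Y i)) := fun i => not_lt.mp (hle i)
  refine h.not_ge (lift_le.{v}.mp ?_)
  calc lift.{v} #(inArcs A (⋃ i, Y i))
      = sum fun i => #(inArcs A (Y i)) := by
        rw [inArcs_iUnion hsep, mk_iUnion_eq_sum_mk_lift (pairwise_disjoint_inArcs hY)]
    _ ≤ sum fun i => #(outArcs A (Y i)) := sum_le_sum _ _ hle'
    _ = lift.{v} #(outArcs A (⋃ i, Y i)) := by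
        rw [outArcs_iUnion hsep, mk_iUnion_eq_sum_mk_lift (pairwise_disjoint_outArcs hY)]

end Union

section WeakComponent

variable {V : Type*} {A : Set (V × V)} {S Y Z : Set V} {x y : V}

instance : Std.Symm (AdjOn A S) where
  symm _ _ h := ⟨h.2.1, h.1, h.2.2.symm⟩

theorem ReachOn.symm (h : ReachOn A S x y) : ReachOn A S y x :=
  Relation.ReflTransGen.stdSymm.symm _ _ h

theorem ReachOn.mem (h : ReachOn A S x y) (hx : x ∈ S) : y ∈ S := by
  induction h with
  | refl => exact hx
  | tail _ hadj _ => exact hadj.2.1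

theorem ReachOn.reachOn_setOf_reachOn (h : ReachOn A S x y) :
    ReachOn A {z | ReachOn A S x z} x y := by
  induction h with
  | refl => exact .refl
  | tail hreach hadj ih => exact ih.tail ⟨hreach, hreach.tail hadj, hadj.2.2⟩

theorem IsWeakComponent.isWeaklyConnectedOn (hY : IsWeakComponent A S Y) :
    IsWeaklyConnectedOn A Y := by
  obtain ⟨r, -, rfl⟩ := hY
  exact ⟨⟨r, .refl⟩, fun x hx y hy =>
    hx.reachOn_setOf_reachOn.symm.trans hy.reachOn_setOf_reachOn⟩

theorem IsWeakComponent.subset (hY : IsWeakComponent A S Y) : Y ⊆ S := by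
  obtain ⟨r, hr, rfl⟩ := hY
  exact fun _ hx => hx.mem hr

theorem IsWeakComponent.eq_of_reachOn (hY : IsWeakComponent A S Y) (hZ : IsWeakComponent A S Z)
    (hx : x ∈ Y) (hy : y ∈ Z) (hxy : ReachOn A S x y) : Y = Z := by
  obtain ⟨r, -, rfl⟩ := hY
  obtain ⟨s, -, rfl⟩ := hZ
  have hrs : ReachOn A S r s := (hx.trans hxy).trans hy.symm
  exact Set.ext fun z => ⟨hrs.symm.trans, hrs.trans⟩

theorem iUnion_isWeakComponent (A : Set (V × V)) (S : Set V) :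
    ⋃ Y : {Y // IsWeakComponent A S Y}, Y.1 = S := by
  refine Set.Subset.antisymm (Set.iUnion_subset fun Y => Y.2.subset) fun x hx => ?_
  exact Set.mem_iUnion.mpr ⟨⟨_, x, hx, rfl⟩, .refl⟩

theorem pairwise_disjoint_isWeakComponent (A : Set (V × V)) (S : Set V) :
    Pairwise (Disjoint on fun Y : {Y // IsWeakComponent A S Y} => Y.1) := fun Y Z hYZ =>
  Set.disjoint_left.mpr fun _ hxY hxZ =>
    hYZ (Subtype.ext (Y.2.eq_of_reachOn Z.2 hxY hxZ .refl))

theorem IsWeakComponent.eq_of_arc (hY : IsWeakComponent A S Y) (hZ : IsWeakComponent A S Z)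
    (hx : x ∈ Y) (hy : y ∈ Z) (hxy : (x, y) ∈ A) : Y = Z :=
  hY.eq_of_reachOn hZ hx hy (.single ⟨hY.subset hx, hZ.subset hy, .inl hxy⟩)

theorem IsOverloaded.exists_isWeakComponent (h : IsOverloaded A S) :
    ∃ Y, IsWeakComponent A S Y ∧ IsOverloaded A Y := by
  rw [← iUnion_isWeakComponent A S] at h
  obtain ⟨⟨Y, hY⟩, hlt⟩ := h.exists_of_iUnion (pairwise_disjoint_isWeakComponent A S)
    fun Y Z _ hx _ hy hxy => Subtype.ext (Y.2.eq_of_arc Z.2 hx hy hxy)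
  exact ⟨Y, hY, hlt⟩

end WeakComponent

/-- In an unbalanced loop-free digraph there is an overloaded vertex set whose
induced subdigraph is weakly connected. -/
theorem exists_weakly_connected_overloaded_set {V : Type*}
    (A : Set (V × V)) (hA : ∀ e ∈ A, e.1 ≠ e.2) (hub : ¬ IsBalanced A) :
    ∃ X : Set V, IsWeaklyConnectedOn A X ∧
      Cardinal.mk (outArcs A X) < Cardinal.mk (inArcs A X) := by
  obtain ⟨X, hX⟩ := exists_isOverloaded_of_not_isBalanced hub
  obtain ⟨Y, hY, hlt⟩ := hX.exists_isWeakComponent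
  exact ⟨Y, hY.isWeaklyConnectedOn, hlt⟩
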